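/- Let a, b ∈ ℝ with a < b, and define S_{a,b} : ℝ → ℝ by S_{a,b}(y) := (1/2)·sgn(a−y)·e^{−|a−y|} − (1/2)·sgn(b−y)·e^{−|b−y|}. Then: (1) S_{a,b} is integrable on ℝ; (2) S_{a,b}(y) > 0 for all y ∈ ℝ \ [a,b]; (3) for every continuous, non-negative, integrable f : ℝ → ℝ, writing F(x) := ∫_ℝ (−(1/2)·sgn(x−y)·e^{−|x−y|}) f(y) dy, one has F(b) − F(a) = ∫_ℝ S_{a,b}(y) f(y) dy. -/

import Mathlib

open MeasureTheory

theorem aux_meas_sign : Measurable Real.sign := by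
  have h : Real.sign = fun r : ℝ => if r < 0 then -1 else if 0 < r then 1 else 0 := by
    funext r; rfl
  rw [h]
  exact Measurable.ite measurableSet_Iio measurable_const
    (Measurable.ite measurableSet_Ioi measurable_const measurable_const)

theorem aux_abs_sign_le (r : ℝ) : |Real.sign r| ≤ 1 := by
  rcases Real.sign_apply_eq r with h | h | h <;> rw [h] <;> norm_num

theorem aux_int_exp : Integrable (fun x : ℝ => Real.exp (-|x|)) := by
  rw [← integrableOn_univ, ← Set.Iic_union_Ioi (a := (0:ℝ))]
  refine IntegrableOn.union ?_ ?_
  · refine (integrableOn_exp_Iic 0).congr_fun (fun x hx => ?_) measurableSet_Iic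
    have hx' : x ≤ 0 := hx
    simp only [abs_of_nonpos hx', neg_neg]
  · refine (exp_neg_integrableOn_Ioi 0 one_pos).congr_fun (fun x hx => ?_) measurableSet_Ioi
    have hx' : 0 < x := hx
    simp only [abs_of_pos hx', neg_mul, one_mul]

theorem aux_meas (c x : ℝ) :
    Measurable (fun y : ℝ => c * Real.sign (x - y) * Real.exp (-|x - y|)) := by
  have h1 : Measurable (fun y : ℝ => Real.sign (x - y)) :=
    aux_meas_sign.comp (measurable_const.sub measurable_id)
  have h2 : Measurable (fun y : ℝ => Real.exp (-|x - y|)) := by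
    apply Continuous.measurable; fun_prop
  exact (h1.const_mul c).mul h2

theorem aux_bound (c x y : ℝ) :
    ‖c * Real.sign (x - y) * Real.exp (-|x - y|)‖ ≤ |c| * Real.exp (-|x - y|) := by
  rw [Real.norm_eq_abs, abs_mul, abs_mul, abs_of_pos (Real.exp_pos _)]
  have := mul_le_mul_of_nonneg_left (aux_abs_sign_le (x - y)) (abs_nonneg c)
  rw [mul_one] at this
  exact mul_le_mul_of_nonneg_right this (Real.exp_pos _).le

theorem aux_int (c x : ℝ) :
    Integrable (fun y : ℝ => c * Real.sign (x - y) * Real.exp (-|x - y|)) := by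
  refine Integrable.mono' ((aux_int_exp.comp_sub_left x).const_mul |c|)
    (aux_meas c x).aestronglyMeasurable ?_
  exact Filter.Eventually.of_forall (fun y => aux_bound c x y)

theorem aux_int_mul (c x : ℝ) (f : ℝ → ℝ) (hf : Integrable f) :
    Integrable (fun y : ℝ => (c * Real.sign (x - y) * Real.exp (-|x - y|)) * f y) := by
  refine hf.bdd_mul (c := |c|) (aux_meas c x).aestronglyMeasurable ?_
  refine Filter.Eventually.of_forall (fun y => (aux_bound c x y).trans ?_)
  have : Real.exp (-|x - y|) ≤ 1 := Real.exp_le_one_iff.mpr (by simp)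
  exact mul_le_of_le_one_right (abs_nonneg c) this

/-- **Lemma 3.4 (non-periodic case).** For `a < b`, the function
`S_{a,b}(y) = (1/2)sgn(a-y)e^{-|a-y|} - (1/2)sgn(b-y)e^{-|b-y|}` is integrable on `ℝ`,
strictly positive outside `[a,b]`, and for every continuous non-negative integrable `f`,
with `F(x) = ∫ g'(x-y) f(y) dy` (`g'(x) = -(1/2)sgn(x)e^{-|x|}`) one has
`F(b) - F(a) = ∫ S_{a,b}(y) f(y) dy`. -/
theorem S_ab_properties_line
    (a b : ℝ) (hab : a < b)
    (S : ℝ → ℝ)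
    (hS : ∀ y, S y = (1/2) * Real.sign (a - y) * Real.exp (-|a - y|)
      - (1/2) * Real.sign (b - y) * Real.exp (-|b - y|)) :
    Integrable S ∧
    (∀ y : ℝ, y ∉ Set.Icc a b → 0 < S y) ∧
    (∀ f : ℝ → ℝ, Continuous f → (∀ x, 0 ≤ f x) → Integrable f →
      ∀ F : ℝ → ℝ,
        (∀ x, F x = ∫ y, (-(1/2) * Real.sign (x - y) * Real.exp (-|x - y|)) * f y) →
        F b - F a = ∫ y, S y * f y) := by
  refine ⟨?_, ?_, ?_⟩
  · have : S = fun y => (1/2) * Real.sign (a - y) * Real.exp (-|a - y|)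
      - (1/2) * Real.sign (b - y) * Real.exp (-|b - y|) := funext hS
    rw [this]
    exact (aux_int (1/2) a).sub (aux_int (1/2) b)
  · intro y hy
    rw [hS]
    by_cases h : y < a
    · have h1 : 0 < a - y := by linarith
      have h2 : 0 < b - y := by linarith
      rw [Real.sign_of_pos h1, Real.sign_of_pos h2, abs_of_pos h1, abs_of_pos h2]
      have : Real.exp (-(b - y)) < Real.exp (-(a - y)) := Real.exp_lt_exp.mpr (by linarith)
      linarith
    · have hb : b < y := by
        by_contra hb
        exact hy ⟨not_lt.mp h, not_lt.mp hb⟩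
      have h1 : a - y < 0 := by linarith
      have h2 : b - y < 0 := by linarith
      rw [Real.sign_of_neg h1, Real.sign_of_neg h2, abs_of_neg h1, abs_of_neg h2]
      have : Real.exp (-(-(a - y))) < Real.exp (-(-(b - y))) :=
        Real.exp_lt_exp.mpr (by linarith)
      linarith
  · intro f _ _ hf F hF
    rw [hF b, hF a, ← integral_sub (aux_int_mul _ b f hf) (aux_int_mul _ a f hf)]
    congr 1
    funext y
    rw [hS]
    ring
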